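/- Church–Rosser property of the name algebra: two terms u and v have the same normal form if and only if u and v are related by the reflexive-symmetric-transitive closure of the one-step rewrite relation →. -/

import Mathlib

/-- Terms of the name algebra over atoms in ℕ. -/
inductive Term : Type
  | var : ℕ → Term
  | projL : Term → Term
  | projR : Term → Term
  | join : Term → Term → Term
deriving DecidableEq

/-- One-step rewrite relation: the three rules `(u ∧ v).l → u`, `(u ∧ v).r → v`,
`(u.l ∧ u.r) → u`, closed under all term contexts. -/
inductive Step : Term → Term → Prop
  | splitL (u v : Term) : Step (Term.projL (Term.join u v)) u
  | splitR (u v : Term) : Step (Term.projR (Term.join u v)) v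
  | merge (u : Term) : Step (Term.join (Term.projL u) (Term.projR u)) u
  | congL {a b : Term} : Step a b → Step (Term.projL a) (Term.projL b)
  | congR {a b : Term} : Step a b → Step (Term.projR a) (Term.projR b)
  | congJoinL {a b : Term} (v : Term) : Step a b → Step (Term.join a v) (Term.join b v)
  | congJoinR {a b : Term} (u : Term) : Step a b → Step (Term.join u a) (Term.join u b)

/-- Reflexive-transitive closure of `Step`. -/
def Steps : Term → Term → Prop := Relation.ReflTransGen Step

/-- A term is in normal form if no rewrite step applies to it. -/
def NormalForm (n : Term) : Prop := ¬ ∃ m, Step n m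

/-- `u ≈ v` : the normal forms of `u` and `v` coincide, i.e. they reach a common normal form. -/
def TermEquiv (u v : Term) : Prop := ∃ n, NormalForm n ∧ Steps u n ∧ Steps v n

namespace NA

def pl : Term → Term
  | .join a _ => a
  | t => .projL t

def pr : Term → Term
  | .join _ b => b
  | t => .projR t

def jn : Term → Term → Term
  | .projL a, .projR b => if a = b then a else .join (.projL a) (.projR b)
  | a, b => .join a b

def nf : Term → Term
  | .var n => .var n
  | .projL t => pl (nf t)
  | .projR t => pr (nf t)
  | .join a b => jn (nf a) (nf b)

theorem jn_cases (a b : Term) :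
    (∃ c, a = .projL c ∧ b = .projR c ∧ jn a b = c) ∨
    ((∀ c, ¬ (a = .projL c ∧ b = .projR c)) ∧ jn a b = .join a b) := by
  unfold jn
  split
  · split_ifs with h
    · subst h; exact Or.inl ⟨_, rfl, rfl, rfl⟩
    · refine Or.inr ⟨?_, rfl⟩
      rintro c ⟨h1, h2⟩
      cases h1; cases h2; exact h rfl
  · rename_i h
    refine Or.inr ⟨?_, rfl⟩
    rintro c ⟨h1, h2⟩
    exact h _ _ h1 h2

theorem pl_cases (t : Term) :
    (∃ a b, t = .join a b ∧ pl t = a ∧ pr t = b) ∨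
    ((∀ a b, t ≠ .join a b) ∧ pl t = .projL t ∧ pr t = .projR t) := by
  cases t <;> simp [pl, pr]

theorem normal_projL {t : Term} (h : NormalForm (.projL t)) :
    NormalForm t ∧ ∀ a b, t ≠ .join a b :=
  ⟨fun ⟨m, hm⟩ => h ⟨_, .congL hm⟩, fun a b e => h ⟨a, e ▸ .splitL a b⟩⟩

theorem normal_join {a b : Term} (h : NormalForm (.join a b)) :
    NormalForm a ∧ NormalForm b ∧ ∀ c, ¬ (a = .projL c ∧ b = .projR c) :=
  ⟨fun ⟨_, hm⟩ => h ⟨_, .congJoinL _ hm⟩, fun ⟨_, hm⟩ => h ⟨_, .congJoinR _ hm⟩,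
    fun c ⟨e1, e2⟩ => h ⟨c, by subst e1 e2; exact .merge c⟩⟩

theorem pl_normal {t : Term} (h : NormalForm t) : NormalForm (pl t) ∧ NormalForm (pr t) := by
  rcases pl_cases t with ⟨a, b, rfl, h1, h2⟩ | ⟨h0, h1, h2⟩
  · rw [h1, h2]; exact ⟨(normal_join h).1, (normal_join h).2.1⟩
  · rw [h1, h2]
    constructor
    · rintro ⟨m, hm⟩
      cases hm with
      | splitL u v => exact h0 _ _ rfl
      | congL hs => exact h ⟨_, hs⟩
    · rintro ⟨m, hm⟩
      cases hm with
      | splitR u v => exact h0 _ _ rfl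
      | congR hs => exact h ⟨_, hs⟩

theorem jn_normal {a b : Term} (ha : NormalForm a) (hb : NormalForm b) :
    NormalForm (jn a b) := by
  rcases jn_cases a b with ⟨c, rfl, rfl, h⟩ | ⟨h0, h⟩
  · rw [h]; exact (normal_projL ha).1
  · rw [h]
    rintro ⟨m, hm⟩
    cases hm with
    | merge => exact h0 _ ⟨rfl, rfl⟩
    | congJoinL _ hs => exact ha ⟨_, hs⟩
    | congJoinR _ hs => exact hb ⟨_, hs⟩

theorem nf_normal (t : Term) : NormalForm (nf t) := by
  induction t with
  | var n => rintro ⟨m, hm⟩; cases hm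
  | projL t ih => exact (pl_normal ih).1
  | projR t ih => exact (pl_normal ih).2
  | join a b iha ihb => exact jn_normal iha ihb

theorem steps_nf (t : Term) : Relation.ReflTransGen Step t (nf t) := by
  induction t with
  | var n => exact .refl
  | projL t ih =>
    refine (ih.lift Term.projL fun _ _ h => Step.congL h).trans ?_
    show Relation.ReflTransGen Step _ (pl (nf t))
    rcases pl_cases (nf t) with ⟨a, b, h0, h1, h2⟩ | ⟨h0, h1, h2⟩
    · rw [h1, h0]; exact .single (.splitL a b)
    · rw [h1]
  | projR t ih =>
    refine (ih.lift Term.projR fun _ _ h => Step.congR h).trans ?_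
    show Relation.ReflTransGen Step _ (pr (nf t))
    rcases pl_cases (nf t) with ⟨a, b, h0, h1, h2⟩ | ⟨h0, h1, h2⟩
    · rw [h2, h0]; exact .single (.splitR a b)
    · rw [h2]
  | join a b iha ihb =>
    refine (iha.lift (fun x => Term.join x b) fun _ _ h => Step.congJoinL b h).trans ?_
    refine (ihb.lift (fun x => Term.join (nf a) x) fun _ _ h => Step.congJoinR _ h).trans ?_
    show Relation.ReflTransGen Step _ (jn (nf a) (nf b))
    rcases jn_cases (nf a) (nf b) with ⟨c, h1, h2, h⟩ | ⟨h0, h⟩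
    · rw [h, h1, h2]; exact .single (.merge c)
    · rw [h]

theorem pl_jn {a b : Term} (ha : NormalForm a) : pl (jn a b) = a ∧ pr (jn a b) = b := by
  rcases jn_cases a b with ⟨c, rfl, rfl, h⟩ | ⟨h0, h⟩
  · rw [h]
    rcases pl_cases c with ⟨x, y, h0, -⟩ | ⟨-, h1, h2⟩
    · exact absurd h0 ((normal_projL ha).2 x y)
    · exact ⟨h1, h2⟩
  · rw [h]; exact ⟨rfl, rfl⟩

theorem jn_pl {t : Term} (h : NormalForm t) : jn (pl t) (pr t) = t := by
  rcases pl_cases t with ⟨a, b, rfl, h1, h2⟩ | ⟨h0, h1, h2⟩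
  · rw [h1, h2]
    rcases jn_cases a b with ⟨c, e1, e2, -⟩ | ⟨-, h'⟩
    · exact absurd ⟨e1, e2⟩ ((normal_join h).2.2 c)
    · exact h'
  · rw [h1, h2]; simp [jn]

theorem nf_step {a b : Term} (h : Step a b) : nf a = nf b := by
  induction h with
  | splitL u v => exact (pl_jn (nf_normal u)).1
  | splitR u v => exact (pl_jn (nf_normal u)).2
  | merge u => exact jn_pl (nf_normal u)
  | congL _ ih => simp [nf, ih]
  | congR _ ih => simp [nf, ih]
  | congJoinL _ _ ih => simp [nf, ih]
  | congJoinR _ _ ih => simp [nf, ih]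

theorem nf_eqv {a b : Term} (h : Relation.EqvGen Step a b) : nf a = nf b := by
  induction h with
  | rel _ _ h => exact nf_step h
  | refl _ => rfl
  | symm _ _ _ ih => exact ih.symm
  | trans _ _ _ _ _ ih1 ih2 => exact ih1.trans ih2

theorem eqv_of_steps {a b : Term} (h : Relation.ReflTransGen Step a b) :
    Relation.EqvGen Step a b := by
  induction h with
  | refl => exact .refl _
  | tail _ h ih => exact .trans _ _ _ ih (.rel _ _ h)

end NA

/-- Church–Rosser: two terms have the same normal form if and only if they are
related by the reflexive-symmetric-transitive closure of the rewrite relation. -/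
theorem church_rosser :
    ∀ u v : Term, TermEquiv u v ↔ Relation.EqvGen Step u v := by
  intro u v
  constructor
  · rintro ⟨n, -, h1, h2⟩
    exact .trans _ _ _ (NA.eqv_of_steps h1) (.symm _ _ (NA.eqv_of_steps h2))
  · intro h
    refine ⟨NA.nf u, NA.nf_normal u, NA.steps_nf u, ?_⟩
    rw [NA.nf_eqv h]
    exact NA.steps_nf v
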